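/- The quotient VB_3'/VB_3'' (the abelianization of the commutator subgroup VB_3' of VB_3) is isomorphic to (ℤ/3ℤ) ⊕ (ℤ/3ℤ) ⊕ (ℤ/3ℤ) ⊕ A, where A is a free abelian group of countably infinite rank (the direct sum of copies of ℤ indexed by ℤ). -/

import Mathlib

/-!
Common setup: the virtual braid group `VB n` and the welded braid group `WB n`
as presented groups, together with the distinguished elements of their
commutator subgroups used in the paper
"Commutator subgroups of virtual and welded braid groups".

Generators: for `i : Fin (n-1)`, `Sum.inl i` represents σ_{i+1} and
`Sum.inr i` represents ρ_{i+1}.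
-/

/-- The generating set of `VB n` (and `WB n`). -/
abbrev VBGen (n : ℕ) := (Fin (n - 1)) ⊕ (Fin (n - 1))

/-- The free group letter σ_i, for `1 ≤ i ≤ n-1` (junk value `1` otherwise). -/
def fσ (n i : ℕ) : FreeGroup (VBGen n) :=
  if h : 1 ≤ i ∧ i - 1 < n - 1 then FreeGroup.of (Sum.inl ⟨i - 1, h.2⟩) else 1

/-- The free group letter ρ_i, for `1 ≤ i ≤ n-1` (junk value `1` otherwise). -/
def fρ (n i : ℕ) : FreeGroup (VBGen n) :=
  if h : 1 ≤ i ∧ i - 1 < n - 1 then FreeGroup.of (Sum.inr ⟨i - 1, h.2⟩) else 1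

/-- The defining relators of the virtual braid group `VB n`. -/
def vbRels (n : ℕ) : Set (FreeGroup (VBGen n)) :=
  {r | ∃ i j, 1 ≤ i ∧ i + 2 ≤ j ∧ j ≤ n - 1 ∧
      (r = fσ n i * fσ n j * (fσ n i)⁻¹ * (fσ n j)⁻¹ ∨
       r = fρ n i * fρ n j * (fρ n i)⁻¹ * (fρ n j)⁻¹ ∨
       r = fσ n i * fρ n j * (fσ n i)⁻¹ * (fρ n j)⁻¹ ∨
       r = fσ n j * fρ n i * (fσ n j)⁻¹ * (fρ n i)⁻¹)} ∪
  {r | ∃ i, 1 ≤ i ∧ i + 1 ≤ n - 1 ∧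
      (r = fσ n i * fσ n (i+1) * fσ n i * (fσ n (i+1))⁻¹ * (fσ n i)⁻¹ * (fσ n (i+1))⁻¹ ∨
       r = fρ n i * fρ n (i+1) * fρ n i * (fρ n (i+1))⁻¹ * (fρ n i)⁻¹ * (fρ n (i+1))⁻¹ ∨
       r = fρ n i * fρ n (i+1) * fσ n i * (fρ n (i+1))⁻¹ * (fρ n i)⁻¹ * (fσ n (i+1))⁻¹)} ∪
  {r | ∃ i, 1 ≤ i ∧ i ≤ n - 1 ∧ r = fρ n i * fρ n i}

/-- The virtual braid group on `n` strands. -/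
abbrev VB (n : ℕ) := PresentedGroup (vbRels n)

/-- The generator σ_i of `VB n`. -/
def vσ (n i : ℕ) : VB n := PresentedGroup.mk (vbRels n) (fσ n i)

/-- The generator ρ_i of `VB n`. -/
def vρ (n i : ℕ) : VB n := PresentedGroup.mk (vbRels n) (fρ n i)

/-- a_m = σ_1^m (ρ_1 σ_1 ρ_1 σ_1⁻¹) σ_1^{-m}. -/
def va (n : ℕ) (m : ℤ) : VB n :=
  (vσ n 1) ^ m * (vρ n 1 * vσ n 1 * vρ n 1 * (vσ n 1)⁻¹) * (vσ n 1) ^ (-m)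

/-- b_{m,ε} = σ_1^m (ρ_1^ε σ_2 ρ_1^ε σ_1⁻¹) σ_1^{-m}. -/
def vb (n : ℕ) (m : ℤ) (ε : ℕ) : VB n :=
  (vσ n 1) ^ m * ((vρ n 1) ^ ε * vσ n 2 * (vρ n 1) ^ ε * (vσ n 1)⁻¹) * (vσ n 1) ^ (-m)

/-- c_l = σ_l σ_1⁻¹. -/
def vc (n l : ℕ) : VB n := vσ n l * (vσ n 1)⁻¹

/-- f_{m,ε} = σ_1^m (ρ_1^ε ρ_2 ρ_1^{ε+1}) σ_1^{-m}; `f_m` is `vf n m 0`. -/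
def vf (n : ℕ) (m : ℤ) (ε : ℕ) : VB n :=
  (vσ n 1) ^ m * ((vρ n 1) ^ ε * vρ n 2 * (vρ n 1) ^ (ε + 1)) * (vσ n 1) ^ (-m)

/-- g_{m,l} = σ_1^m (ρ_l ρ_1) σ_1^{-m}. -/
def vg (n : ℕ) (m : ℤ) (l : ℕ) : VB n :=
  (vσ n 1) ^ m * (vρ n l * vρ n 1) * (vσ n 1) ^ (-m)

/-- The additional relators ρ_i σ_{i+1} σ_i (ρ_{i+1})⁻¹ σ_i⁻¹ σ_{i+1}⁻¹ of the
welded braid group. -/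
def wbExtraRels (n : ℕ) : Set (FreeGroup (VBGen n)) :=
  {r | ∃ i, 1 ≤ i ∧ i + 1 ≤ n - 1 ∧
      r = fρ n i * fσ n (i+1) * fσ n i * (fρ n (i+1))⁻¹ * (fσ n i)⁻¹ * (fσ n (i+1))⁻¹}

/-- The defining relators of the welded braid group `WB n`. -/
def wbRels (n : ℕ) : Set (FreeGroup (VBGen n)) := vbRels n ∪ wbExtraRels n

/-- The welded braid group on `n` strands. -/
abbrev WB (n : ℕ) := PresentedGroup (wbRels n)

/-- The generator σ_i of `WB n`. -/
def wσ (n i : ℕ) : WB n := PresentedGroup.mk (wbRels n) (fσ n i)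

/-- The generator ρ_i of `WB n`. -/
def wρ (n i : ℕ) : WB n := PresentedGroup.mk (wbRels n) (fρ n i)

/-- a_m in `WB n`. -/
def wa (n : ℕ) (m : ℤ) : WB n :=
  (wσ n 1) ^ m * (wρ n 1 * wσ n 1 * wρ n 1 * (wσ n 1)⁻¹) * (wσ n 1) ^ (-m)

/-- f_{m,ε} in `WB n`; `f_m` is `wf n m 0`. -/
def wf (n : ℕ) (m : ℤ) (ε : ℕ) : WB n :=
  (wσ n 1) ^ m * ((wρ n 1) ^ ε * wρ n 2 * (wρ n 1) ^ (ε + 1)) * (wσ n 1) ^ (-m)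

/-- c_l in `WB n`. -/
def wc (n l : ℕ) : WB n := wσ n l * (wσ n 1)⁻¹

/-- g_{m,l} in `WB n`. -/
def wg (n : ℕ) (m : ℤ) (l : ℕ) : WB n :=
  (wσ n 1) ^ m * (wρ n l * wρ n 1) * (wσ n 1) ^ (-m)

/-!
`VB 3` is generated by `s = σ₁`, `r = ρ₁` and the element `t = ρ₁ρ₂` of order three, subject to
`rtr = t⁻¹`, `r² = 1` and the braid relation between `s` and `tst⁻¹`. Its commutator subgroup is
the normal closure of `t` and `[r, s]`, so the abelianization `A` of that subgroup is generated, as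
a module under conjugation, by the classes of `t` and `[r, s]`. Here `r` acts by `-1` and `t`
trivially, while the braid relation says that the `3`-torsion class of `t` is annihilated by
`x³ + x² - x - 1 = (x - 1)(x + 1)²`, where `x` is the action of `s`. Hence three classes of
order `3` together with the `x`-translates of the class of `[r, s]` generate `A`.

There are no further relations: `VB 3` acts by affine maps on the proposed group, with `s` having
linear part `x`, `r` linear part `-1`, and `t` being a translation. The commutator subgroup acts
by translations, and the translation vectors recover each coordinate, up to a factor `2` on the
free part because `[r, s]` translates by `-2u` when `s` sends `0` to `u`.
-/

open scoped commutatorElement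

section Group

variable {G H : Type*} [Group G] [Group H]

theorem commutator_le_ker_of_pairwise_commute {S : Set G} (hS : Subgroup.closure S = ⊤)
    (f : G →* H) (hf : ∀ x ∈ S, ∀ y ∈ S, Commute (f x) (f y)) : commutator G ≤ f.ker := by
  have hcomm : ∀ x ∈ f '' S, ∀ y ∈ f '' S, x * y = y * x := by
    rintro _ ⟨x, hx, rfl⟩ _ ⟨y, hy, rfl⟩
    exact hf x hx y hy
  have := Subgroup.isMulCommutative_closure hcomm
  have hmem (g : G) : f g ∈ Subgroup.closure (f '' S) := by
    rw [← f.map_closure, hS]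
    exact Subgroup.mem_map_of_mem f (Subgroup.mem_top g)
  refine Subgroup.commutator_le.2 fun g _ h _ => ?_
  rw [MonoidHom.mem_ker, map_commutatorElement, commutatorElement_eq_one_iff_mul_comm]
  exact setLike_mul_comm (hmem g) (hmem h)

theorem commutatorElement_mem_commutator (g h : G) : ⁅g, h⁆ ∈ commutator G :=
  Subgroup.commutator_mem_commutator (Subgroup.mem_top g) (Subgroup.mem_top h)

variable (N : Subgroup G)

/-- The abelianization of a subgroup, written additively so that it can carry a linear
representation. -/
abbrev AbModule : Type _ := Additive (Abelianization N)

variable {N}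

/-- The class of an element of a subgroup in its abelianization. -/
def abClass (n : N) : AbModule N := Additive.ofMul (Abelianization.of n)

theorem abClass_surjective : Function.Surjective (abClass : N → AbModule N) :=
  QuotientGroup.mk_surjective

theorem abClass_mul (m n : N) : abClass (m * n) = abClass m + abClass n := rfl

theorem abClass_inv (n : N) : abClass n⁻¹ = -abClass n := rfl

variable [N.Normal]

variable (N) in
/-- The representation of the ambient group on the abelianization of a normal subgroup induced by
conjugation. -/
def conjAb : G →* (AbModule N ≃ₗ[ℤ] AbModule N) where
  toFun g := (MulAut.conjNormal g).abelianizationCongr.toAdditive.toIntLinearEquiv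
  map_one' := by
    ext v
    obtain ⟨n, rfl⟩ := abClass_surjective v
    exact congrArg abClass (by simp)
  map_mul' g h := by
    ext v
    obtain ⟨n, rfl⟩ := abClass_surjective v
    exact congrArg abClass (by simp)

theorem conjAb_abClass (g : G) (n : N) :
    conjAb N g (abClass n) = abClass (MulAut.conjNormal g n) := rfl

theorem conjAb_eq_one_of_mem {g : G} (hg : g ∈ N) : conjAb N g = 1 := by
  ext v
  obtain ⟨n, rfl⟩ := abClass_surjective v
  have hconj : MulAut.conjNormal g n = ⟨g, hg⟩ * n * ⟨g, hg⟩⁻¹ := Subtype.ext rfl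
  rw [conjAb_abClass, hconj, abClass_mul, abClass_mul, abClass_inv, add_neg_cancel_comm,
    LinearEquiv.coe_one, id]

theorem commute_conjAb (hN : commutator G ≤ N) (g h : G) :
    Commute (conjAb N g) (conjAb N h) := by
  rw [← commutatorElement_eq_one_iff_commute, ← map_commutatorElement]
  exact conjAb_eq_one_of_mem (hN (commutatorElement_mem_commutator g h))

open scoped Pointwise in
theorem eq_top_of_conjAb_smul_eq {S R : Set G} (hS : Subgroup.closure S = ⊤)
    (hR : Subgroup.normalClosure R = N) (T : AddSubgroup (AbModule N))
    (hST : ∀ g ∈ S, conjAb N g • T = T) (hRT : ∀ n : N, (n : G) ∈ R → abClass n ∈ T) :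
    T = ⊤ := by
  have hstab (g : G) : conjAb N g • T = T := by
    have hle : Subgroup.closure S ≤ (MulAction.stabilizer _ T).comap (conjAb N) :=
      (Subgroup.closure_le _).2 hST
    exact hle (hS ▸ Subgroup.mem_top g)
  let L : Subgroup G := ((AddSubgroup.toSubgroup' T).comap Abelianization.of).map N.subtype
  have hL : L.Normal := by
    refine ⟨?_⟩
    rintro _ ⟨n, hn, rfl⟩ g
    refine ⟨MulAut.conjNormal g n, ?_, rfl⟩
    have hgn : conjAb N g • abClass n ∈ conjAb N g • T :=
      AddSubgroup.smul_mem_pointwise_smul _ _ _ hn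
    rwa [hstab] at hgn
  have hNL : N ≤ L := hR.symm.le.trans <| Subgroup.normalClosure_le_normal fun x hx =>
    ⟨⟨x, hR ▸ Subgroup.subset_normalClosure hx⟩, hRT _ hx, rfl⟩
  refine eq_top_iff.2 fun v _ => ?_
  obtain ⟨n, rfl⟩ := abClass_surjective v
  obtain ⟨m, hm, hmn⟩ := hNL n.2
  exact Subtype.ext hmn ▸ hm

open scoped Pointwise in
theorem smul_range_eq_of_comp {α M V : Type*} [Monoid α] [AddGroup M] [AddGroup V]
    [DistribMulAction α V] {f : M →+ V} {a : α} (e : M ≃ M) (h : ∀ v, f (e v) = a • f v) :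
    a • f.range = f.range := by
  ext v
  constructor
  · rintro ⟨_, ⟨w, rfl⟩, rfl⟩
    exact ⟨e w, h w⟩
  · rintro ⟨w, rfl⟩
    refine ⟨f (e.symm w), ⟨_, rfl⟩, ?_⟩
    exact (h (e.symm w)).symm.trans (by rw [e.apply_symm_apply])

end Group

section Affine

variable {R M : Type*} [Ring R] [AddCommGroup M] [Module R M]

theorem affineEquiv_apply_eq_linear_add (e : M ≃ᵃ[R] M) (v : M) : e v = e.linear v + e 0 := by
  simpa using e.map_vadd 0 v

variable {G : Type*} [Group G] {N : Subgroup G} (φ : G →* (M ≃ᵃ[R] M))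
  (hφ : N ≤ (AffineEquiv.linearHom.comp φ).ker)

/-- If an affine action of a group restricts to translations on a subgroup, the translation vectors
define an additive map on the abelianization of the subgroup. -/
def translationPart : AbModule N →+ M :=
  MonoidHom.toAdditiveLeft <| Abelianization.lift
    { toFun n := Multiplicative.ofAdd (φ n 0)
      map_one' := by simp
      map_mul' m n := by
        have hm : (φ m).linear = 1 := hφ m.2
        rw [Subgroup.coe_mul, map_mul, AffineEquiv.mul_def, AffineEquiv.trans_apply,
          affineEquiv_apply_eq_linear_add, hm, LinearEquiv.coe_one, id, add_comm, ofAdd_add] }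

theorem translationPart_abClass (n : N) : translationPart φ hφ (abClass n) = φ n 0 := rfl

theorem translationPart_conjAb [N.Normal] (g : G) (v : AbModule N) :
    translationPart φ hφ (conjAb N g v) = (φ g).linear (translationPart φ hφ v) := by
  obtain ⟨n, rfl⟩ := abClass_surjective v
  have hn : (φ n).linear = 1 := hφ n.2
  rw [conjAb_abClass, translationPart_abClass, translationPart_abClass, MulAut.conjNormal_apply,
    map_mul, map_mul, map_inv]
  change φ g (φ n ((φ g)⁻¹ 0)) = _
  rw [affineEquiv_apply_eq_linear_add (φ n), hn, LinearEquiv.coe_one, id, add_comm]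
  have hg : φ g ((φ g)⁻¹ 0) = 0 := (φ g).apply_symm_apply 0
  exact ((φ g).map_vadd _ _).trans (by rw [hg, vadd_eq_add, add_zero])

end Affine

theorem addMonoidHom_zmod_ext {n : ℕ} {V : Type*} [AddGroup V] {f g : ZMod n →+ V}
    (h : f 1 = g 1) : f = g := by
  ext p
  obtain ⟨k, rfl⟩ := ZMod.intCast_surjective p
  rw [← zsmul_one, map_zsmul, map_zsmul, h]

namespace VB

section Relations

theorem mk_mul_mul_eq_of_mem {α : Type*} {rels : Set (FreeGroup α)} {a b c d e f : FreeGroup α}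
    (h : a * b * c * f⁻¹ * e⁻¹ * d⁻¹ ∈ rels) :
    PresentedGroup.mk rels a * PresentedGroup.mk rels b * PresentedGroup.mk rels c =
      PresentedGroup.mk rels d * PresentedGroup.mk rels e * PresentedGroup.mk rels f := by
  have hrel := PresentedGroup.one_of_mem h
  simp only [map_mul, map_inv] at hrel
  rwa [mul_inv_eq_one, mul_inv_eq_iff_eq_mul, mul_inv_eq_iff_eq_mul] at hrel

variable {n i : ℕ}

theorem braid (hi : 1 ≤ i) (hin : i + 1 ≤ n - 1) :
    vσ n i * vσ n (i + 1) * vσ n i = vσ n (i + 1) * vσ n i * vσ n (i + 1) :=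
  mk_mul_mul_eq_of_mem (Or.inl (Or.inr ⟨i, hi, hin, Or.inl rfl⟩))

theorem rho_braid (hi : 1 ≤ i) (hin : i + 1 ≤ n - 1) :
    vρ n i * vρ n (i + 1) * vρ n i = vρ n (i + 1) * vρ n i * vρ n (i + 1) :=
  mk_mul_mul_eq_of_mem (Or.inl (Or.inr ⟨i, hi, hin, Or.inr (Or.inl rfl)⟩))

theorem mixed_braid (hi : 1 ≤ i) (hin : i + 1 ≤ n - 1) :
    vρ n i * vρ n (i + 1) * vσ n i = vσ n (i + 1) * vρ n i * vρ n (i + 1) :=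
  mk_mul_mul_eq_of_mem (Or.inl (Or.inr ⟨i, hi, hin, Or.inr (Or.inr rfl)⟩))

theorem rho_mul_self (hi : 1 ≤ i) (hin : i ≤ n - 1) : vρ n i * vρ n i = 1 :=
  PresentedGroup.one_of_mem (Or.inr ⟨i, hi, hin, rfl⟩)

end Relations

local notation "σ₁" => vσ 3 1
local notation "σ₂" => vσ 3 2
local notation "ρ₁" => vρ 3 1
local notation "ρ₂" => vρ 3 2

/-- The product of the two symmetric generators of `VB 3`, which acts on the strands as a
3-cycle. -/
def threeCycle : VB 3 := ρ₁ * ρ₂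

local notation "τ" => threeCycle

theorem rho_one_mul_self : ρ₁ * ρ₁ = 1 := rho_mul_self le_rfl (by decide)

theorem rho_one_inv : (ρ₁)⁻¹ = ρ₁ :=
  inv_eq_of_mul_eq_one_left rho_one_mul_self

theorem rho_two_inv : (ρ₂)⁻¹ = ρ₂ :=
  inv_eq_of_mul_eq_one_left (rho_mul_self (by decide) le_rfl)

theorem rho_two_eq : ρ₂ = ρ₁ * τ := by
  rw [threeCycle, ← mul_assoc, rho_one_mul_self, one_mul]

theorem sigma_two_eq : σ₂ = τ * σ₁ * τ⁻¹ := by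
  rw [eq_mul_inv_iff_mul_eq, threeCycle, ← mul_assoc]
  exact (mixed_braid le_rfl le_rfl).symm

theorem threeCycle_inv : τ⁻¹ = ρ₂ * ρ₁ := by
  rw [threeCycle, mul_inv_rev, rho_one_inv, rho_two_inv]

theorem threeCycle_eq_commutator : τ = ⁅ρ₂, ρ₁⁆ := by
  rw [commutatorElement_def, rho_one_inv, rho_two_inv, ← rho_braid (n := 3) le_rfl le_rfl,
    mul_assoc (ρ₁ * ρ₂), rho_one_mul_self, mul_one, threeCycle]

theorem threeCycle_pow_three : τ ^ 3 = 1 := by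
  have hτ : τ = τ⁻¹ * τ⁻¹ := by
    rw [threeCycle_inv, ← mul_assoc]
    exact threeCycle_eq_commutator.trans (by
      rw [commutatorElement_def, rho_one_inv, rho_two_inv])
  rw [eq_mul_inv_iff_mul_eq, eq_inv_iff_mul_eq_one] at hτ
  rwa [pow_three']

theorem rho_conj_threeCycle : ρ₁ * τ * (ρ₁)⁻¹ = τ⁻¹ := by
  rw [← rho_two_eq, rho_one_inv, threeCycle_inv]

theorem closure_sigma_rho_threeCycle :
    Subgroup.closure ({σ₁, ρ₁, τ} : Set (VB 3)) = ⊤ := by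
  have hσ : σ₁ ∈ Subgroup.closure ({σ₁, ρ₁, τ} : Set (VB 3)) := Subgroup.subset_closure (by simp)
  have hρ : ρ₁ ∈ Subgroup.closure ({σ₁, ρ₁, τ} : Set (VB 3)) := Subgroup.subset_closure (by simp)
  have hτ : τ ∈ Subgroup.closure ({σ₁, ρ₁, τ} : Set (VB 3)) := Subgroup.subset_closure (by simp)
  have hσ₂ : σ₂ ∈ Subgroup.closure ({σ₁, ρ₁, τ} : Set (VB 3)) := by
    rw [sigma_two_eq]
    exact mul_mem (mul_mem hτ hσ) (inv_mem hτ)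
  have hρ₂ : ρ₂ ∈ Subgroup.closure ({σ₁, ρ₁, τ} : Set (VB 3)) := by
    rw [rho_two_eq]
    exact mul_mem hρ hτ
  rw [eq_top_iff, ← PresentedGroup.closure_range_of, Subgroup.closure_le]
  rintro _ ⟨i | i, rfl⟩ <;> fin_cases i
  exacts [hσ, hσ₂, hρ, hρ₂]

section Lift

variable {H : Type*} [Group H]

theorem lift_eq_one_of_mem_vbRels_three {s₁ s₂ r₁ r₂ : H} (hs : s₁ * s₂ * s₁ = s₂ * s₁ * s₂)
    (hr : r₁ * r₂ * r₁ = r₂ * r₁ * r₂) (hrs : r₁ * r₂ * s₁ = s₂ * r₁ * r₂) (hr₁ : r₁ * r₁ = 1)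
    (hr₂ : r₂ * r₂ = 1) :
    ∀ x ∈ vbRels 3, FreeGroup.lift (Sum.elim ![s₁, s₂] ![r₁, r₂]) x = 1 := by
  set F := FreeGroup.lift (Sum.elim ![s₁, s₂] ![r₁, r₂])
  have hFσ₁ : F (fσ 3 1) = s₁ := FreeGroup.lift_apply_of
  have hFσ₂ : F (fσ 3 (1 + 1)) = s₂ := FreeGroup.lift_apply_of
  have hFρ₁ : F (fρ 3 1) = r₁ := FreeGroup.lift_apply_of
  have hFρ₂ : F (fρ 3 (1 + 1)) = r₂ := FreeGroup.lift_apply_of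
  rintro _ ((⟨i, j, hi, hij, hj, -⟩ | ⟨i, hi, hin, h⟩) | ⟨i, hi, hin, rfl⟩)
  · omega
  · obtain rfl : i = 1 := by omega
    rcases h with rfl | rfl | rfl <;>
      simp only [map_mul, map_inv, mul_inv_eq_iff_eq_mul, one_mul, hFσ₁, hFσ₂, hFρ₁, hFρ₂]
    exacts [hs, hr, hrs]
  · obtain rfl | rfl : i = 1 ∨ i = 1 + 1 := by omega
    · rw [map_mul, hFρ₁, hr₁]
    · rw [map_mul, hFρ₂, hr₂]

variable (s r t : H)

/-- The homomorphism from `VB 3` with prescribed values on `σ₁`, `ρ₁` and `threeCycle`. -/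
def lift (hr : r * r = 1) (ht : t ^ 3 = 1) (hrt : r * t * r = t⁻¹)
    (hb : s * (t * s * t⁻¹) * s = t * s * t⁻¹ * s * (t * s * t⁻¹)) : VB 3 →* H :=
  PresentedGroup.toGroup <| lift_eq_one_of_mem_vbRels_three (s₁ := s) (s₂ := t * s * t⁻¹)
    (r₁ := r) (r₂ := r * t) hb
    (calc
      r * (r * t) * r = t * r := by rw [← mul_assoc, hr, one_mul]
      _ = r * (r * t * r) := by rw [mul_assoc, ← mul_assoc, hr, one_mul]
      _ = r * t * t := by
        rw [hrt, mul_assoc, mul_right_inj, inv_eq_iff_mul_eq_one, ← pow_three, ht]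
      _ = r * t * r * (r * t) := by rw [mul_assoc (r * t), ← mul_assoc r, hr, one_mul])
    (by rw [← mul_assoc, hr, one_mul, mul_assoc _ r, ← mul_assoc r, hr, one_mul,
      inv_mul_cancel_right])
    hr (by rw [← mul_assoc, hrt, inv_mul_cancel])

variable {s r t} (hr : r * r = 1) (ht : t ^ 3 = 1) (hrt : r * t * r = t⁻¹)
  (hb : s * (t * s * t⁻¹) * s = t * s * t⁻¹ * s * (t * s * t⁻¹))

theorem lift_sigma : lift s r t hr ht hrt hb σ₁ = s := PresentedGroup.toGroup.of _

theorem lift_rho : lift s r t hr ht hrt hb ρ₁ = r := PresentedGroup.toGroup.of _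

theorem lift_threeCycle : lift s r t hr ht hrt hb τ = t := by
  have hρ₂ : lift s r t hr ht hrt hb ρ₂ = r * t := PresentedGroup.toGroup.of _
  rw [threeCycle, map_mul, lift_rho, hρ₂, ← mul_assoc, hr, one_mul]

end Lift

theorem commutator_le_ker {H : Type*} [Group H] {f : VB 3 →* H} (hρσ : Commute (f ρ₁) (f σ₁))
    (hτ : f τ = 1) : commutator (VB 3) ≤ f.ker := by
  refine commutator_le_ker_of_pairwise_commute closure_sigma_rho_threeCycle f ?_
  rintro _ (rfl | rfl | rfl) _ (rfl | rfl | rfl) <;> simp [hτ, hρσ, hρσ.symm]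

theorem threeCycle_mem_commutator : τ ∈ commutator (VB 3) :=
  threeCycle_eq_commutator ▸ commutatorElement_mem_commutator _ _

theorem normalClosure_eq_commutator :
    Subgroup.normalClosure {τ, ⁅ρ₁, σ₁⁆} = commutator (VB 3) := by
  apply le_antisymm
  · refine Subgroup.normalClosure_le_normal ?_
    rintro _ (rfl | rfl)
    exacts [threeCycle_mem_commutator, commutatorElement_mem_commutator _ _]
  · have hmem {x : VB 3} (hx : x ∈ ({τ, ⁅ρ₁, σ₁⁆} : Set (VB 3))) :
        QuotientGroup.mk' (Subgroup.normalClosure {τ, ⁅ρ₁, σ₁⁆}) x = 1 :=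
      (QuotientGroup.eq_one_iff x).2 (Subgroup.subset_normalClosure hx)
    rw [← QuotientGroup.ker_mk' (Subgroup.normalClosure {τ, ⁅ρ₁, σ₁⁆})]
    refine commutator_le_ker ?_ (hmem (by simp))
    rw [← commutatorElement_eq_one_iff_commute, ← map_commutatorElement]
    exact hmem (by simp)

local notation "K" => commutator (VB 3)

/-- The class of `threeCycle` in the abelianized commutator subgroup. -/
def threeCycleClass : AbModule K := abClass ⟨τ, threeCycle_mem_commutator⟩

/-- The class of `va 3 m`, which is the conjugate of `⁅ρ₁, σ₁⁆` by `σ₁ ^ m`, in the abelianized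
commutator subgroup. -/
def mixedClass (m : ℤ) : AbModule K :=
  conjAb K (σ₁ ^ m) (abClass ⟨⁅ρ₁, σ₁⁆, commutatorElement_mem_commutator _ _⟩)

theorem three_nsmul_threeCycleClass : 3 • threeCycleClass = 0 :=
  congrArg abClass (Subtype.ext threeCycle_pow_three)

theorem conjAb_sigma_threeCycleClass_sub :
    conjAb K σ₁ threeCycleClass - conjAb K σ₁ (conjAb K σ₁ threeCycleClass) =
      threeCycleClass - conjAb K σ₁ threeCycleClass +
        conjAb K σ₁ (conjAb K σ₁ threeCycleClass) -
        conjAb K σ₁ (conjAb K σ₁ (conjAb K σ₁ threeCycleClass)) := by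
  have hbraid : σ₁ * (τ * σ₁ * τ⁻¹) * σ₁ = τ * σ₁ * τ⁻¹ * σ₁ * (τ * σ₁ * τ⁻¹) := by
    rw [← sigma_two_eq]
    exact braid le_rfl le_rfl
  let c : K ≃* K := MulAut.conjNormal σ₁
  let x : K := ⟨τ, threeCycle_mem_commutator⟩
  suffices h : c x / c (c x) = x / c x * c (c x) / c (c (c x)) from congrArg abClass h
  refine Subtype.ext ?_
  calc (σ₁ * τ * (σ₁)⁻¹) / (σ₁ * (σ₁ * τ * (σ₁)⁻¹) * (σ₁)⁻¹)
    _ = σ₁ * (τ * σ₁ * τ⁻¹) * σ₁ * (σ₁)⁻¹ ^ 3 := by simp only [div_eq_mul_inv]; group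
    _ = τ * σ₁ * τ⁻¹ * σ₁ * (τ * σ₁ * τ⁻¹) * (σ₁)⁻¹ ^ 3 := by rw [hbraid]
    _ = τ / (σ₁ * τ * (σ₁)⁻¹) * (σ₁ * (σ₁ * τ * (σ₁)⁻¹) * (σ₁)⁻¹) /
        (σ₁ * (σ₁ * (σ₁ * τ * (σ₁)⁻¹) * (σ₁)⁻¹) * (σ₁)⁻¹) := by
      simp only [div_eq_mul_inv]; group

theorem conjAb_sigma_iterate_three_threeCycleClass :
    conjAb K σ₁ (conjAb K σ₁ (conjAb K σ₁ threeCycleClass)) =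
      threeCycleClass + conjAb K σ₁ threeCycleClass -
        conjAb K σ₁ (conjAb K σ₁ threeCycleClass) := by
  have h₀ := three_nsmul_threeCycleClass
  have h₁ := congrArg (conjAb K σ₁) h₀
  have h₂ := congrArg (conjAb K σ₁) h₁
  simp only [map_nsmul, map_zero] at h₁ h₂
  have h := conjAb_sigma_threeCycleClass_sub
  linear_combination (norm := module) h - h₁ + h₂

theorem conjAb_rho_threeCycleClass : conjAb K ρ₁ threeCycleClass = -threeCycleClass :=
  congrArg abClass (Subtype.ext rho_conj_threeCycle)

theorem conjAb_conjAb_comm (g h : VB 3) (v : AbModule K) :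
    conjAb K g (conjAb K h v) = conjAb K h (conjAb K g v) :=
  LinearEquiv.congr_fun (commute_conjAb le_rfl g h) v

theorem conjAb_sigma_mixedClass (m : ℤ) : conjAb K σ₁ (mixedClass m) = mixedClass (m + 1) := by
  rw [mixedClass, mixedClass, ← LinearEquiv.mul_apply, ← map_mul, ← zpow_one_add, add_comm]

theorem conjAb_rho_mixedClass (m : ℤ) : conjAb K ρ₁ (mixedClass m) = -mixedClass m := by
  have h : ρ₁ * ⁅ρ₁, σ₁⁆ * (ρ₁)⁻¹ = ⁅ρ₁, σ₁⁆⁻¹ := by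
    rw [commutatorElement_inv]
    simp only [commutatorElement_def, rho_one_inv, ← mul_assoc]
    rw [rho_one_mul_self, one_mul]
  rw [mixedClass, conjAb_conjAb_comm, ← map_neg]
  exact congrArg (conjAb K (σ₁ ^ m)) (congrArg abClass (Subtype.ext h))

theorem conjAb_threeCycle : conjAb K τ = 1 := conjAb_eq_one_of_mem threeCycle_mem_commutator

/-- The group that is shown to be the abelianized commutator subgroup of `VB 3`. -/
abbrev Model : Type := ZMod 3 × ZMod 3 × ZMod 3 × (ℤ →₀ ℤ)

/-- The automorphism of the model of the abelianized commutator subgroup that corresponds to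
conjugation by `σ₁`. The first three coordinates are taken with respect to the orbit of
`threeCycleClass`. -/
noncomputable def modelShift : Model ≃ₗ[ℤ] Model :=
  AddEquiv.toIntLinearEquiv
    { toFun v := (v.2.2.1, v.1 + v.2.2.1, v.2.1 - v.2.2.1,
        Finsupp.domCongr (Equiv.addRight 1) v.2.2.2)
      invFun v := (v.2.1 - v.1, v.2.2.1 + v.1, v.1,
        (Finsupp.domCongr (Equiv.addRight 1)).symm v.2.2.2)
      left_inv v := by
        simp only [add_sub_cancel_right, sub_add_cancel, AddEquiv.symm_apply_apply]
      right_inv v := by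
        simp only [sub_add_cancel, add_sub_cancel_right, AddEquiv.apply_symm_apply]
      map_add' v w := by
        simp only [Prod.fst_add, Prod.snd_add, map_add, Prod.mk_add_mk, add_add_add_comm,
          add_sub_add_comm] }

theorem modelShift_apply (p q r : ZMod 3) (h : ℤ →₀ ℤ) :
    modelShift (p, q, r, h) = (r, p + r, q - r, Finsupp.domCongr (Equiv.addRight 1) h) := rfl

theorem modelShift_single (m k : ℤ) :
    modelShift (0, 0, 0, Finsupp.single m k) = (0, 0, 0, Finsupp.single (m + 1) k) := by
  simp [modelShift_apply]

/-- The homomorphism from `ZMod 3` to the abelianized commutator subgroup that sends `1` to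
`threeCycleClass`. -/
def threeCycleHom : ZMod 3 →+ AbModule K :=
  ZMod.lift 3 ⟨zmultiplesHom _ threeCycleClass,
    (natCast_zsmul threeCycleClass 3).trans three_nsmul_threeCycleClass⟩

theorem threeCycleHom_one : threeCycleHom 1 = threeCycleClass := by
  rw [← Int.cast_one, threeCycleHom, ZMod.lift_coe]
  exact one_zsmul _

theorem conjAb_sigma_iterate_three_threeCycleHom (p : ZMod 3) :
    conjAb K σ₁ (conjAb K σ₁ (conjAb K σ₁ (threeCycleHom p))) =
      threeCycleHom p + conjAb K σ₁ (threeCycleHom p) -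
        conjAb K σ₁ (conjAb K σ₁ (threeCycleHom p)) := by
  let S : AbModule K →+ AbModule K := (conjAb K σ₁).toAddMonoidHom
  have h : S.comp (S.comp (S.comp threeCycleHom)) =
      threeCycleHom + S.comp threeCycleHom - S.comp (S.comp threeCycleHom) := by
    refine addMonoidHom_zmod_ext ?_
    simpa [threeCycleHom_one, S] using conjAb_sigma_iterate_three_threeCycleClass
  exact DFunLike.congr_fun h p

theorem conjAb_rho_threeCycleHom (p : ZMod 3) :
    conjAb K ρ₁ (threeCycleHom p) = -threeCycleHom p := by
  have h : (conjAb K ρ₁).toAddMonoidHom.comp threeCycleHom = -threeCycleHom := by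
    refine addMonoidHom_zmod_ext ?_
    simpa [threeCycleHom_one] using conjAb_rho_threeCycleClass
  exact DFunLike.congr_fun h p

/-- The homomorphism from the model to the abelianized commutator subgroup that sends the
generators of the factors `ZMod 3` to the classes of the conjugates of `threeCycle` by powers of
`σ₁`, and `Finsupp.single m 1` to `mixedClass m`. -/
noncomputable def ofModel : Model →+ AbModule K :=
  threeCycleHom.coprod <|
    ((conjAb K σ₁).toAddMonoidHom.comp threeCycleHom).coprod <|
      ((conjAb K σ₁ * conjAb K σ₁).toAddMonoidHom.comp threeCycleHom).coprod
        (Finsupp.linearCombination ℤ mixedClass).toAddMonoidHom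

theorem ofModel_apply (p q r : ZMod 3) (h : ℤ →₀ ℤ) :
    ofModel (p, q, r, h) = threeCycleHom p + (conjAb K σ₁ (threeCycleHom q) +
      (conjAb K σ₁ (conjAb K σ₁ (threeCycleHom r)) + Finsupp.linearCombination ℤ mixedClass h)) :=
  rfl

theorem conjAb_sigma_linearCombination (h : ℤ →₀ ℤ) :
    conjAb K σ₁ (Finsupp.linearCombination ℤ mixedClass h) =
      Finsupp.linearCombination ℤ mixedClass (Finsupp.domCongr (Equiv.addRight 1) h) := by
  induction h using Finsupp.induction_linear with
  | zero => simp
  | add f g hf hg => rw [map_add, map_add, hf, hg, map_add, map_add]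
  | single m k => simp [conjAb_sigma_mixedClass]

theorem conjAb_rho_linearCombination (h : ℤ →₀ ℤ) :
    conjAb K ρ₁ (Finsupp.linearCombination ℤ mixedClass h) =
      -Finsupp.linearCombination ℤ mixedClass h := by
  induction h using Finsupp.induction_linear with
  | zero => simp
  | add f g hf hg => rw [map_add, map_add, hf, hg, neg_add]
  | single m k => simp [conjAb_rho_mixedClass]

theorem ofModel_modelShift (v : Model) : ofModel (modelShift v) = conjAb K σ₁ (ofModel v) := by
  obtain ⟨p, q, r, h⟩ := v
  rw [modelShift_apply, ofModel_apply, ofModel_apply]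
  simp only [map_add, map_sub, conjAb_sigma_iterate_three_threeCycleHom,
    conjAb_sigma_linearCombination]
  abel

theorem ofModel_neg (v : Model) : ofModel (-v) = conjAb K ρ₁ (ofModel v) := by
  obtain ⟨p, q, r, h⟩ := v
  rw [map_neg, ofModel_apply]
  simp only [map_add, conjAb_conjAb_comm ρ₁ σ₁, conjAb_rho_threeCycleHom, map_neg,
    conjAb_rho_linearCombination, neg_add]

theorem ofModel_surjective : Function.Surjective ofModel := by
  rw [← AddMonoidHom.range_eq_top]
  refine eq_top_of_conjAb_smul_eq closure_sigma_rho_threeCycle normalClosure_eq_commutator _ ?_ ?_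
  · rintro _ (rfl | rfl | rfl)
    · exact smul_range_eq_of_comp modelShift.toEquiv ofModel_modelShift
    · exact smul_range_eq_of_comp (Equiv.neg Model) ofModel_neg
    · rw [conjAb_threeCycle, one_smul]
  · rintro ⟨n, hn⟩ (rfl | rfl)
    · exact ⟨(1, 0, 0, 0), by simp [ofModel_apply, threeCycleHom_one, threeCycleClass]⟩
    · exact ⟨(0, 0, 0, Finsupp.single 0 1), by simp [ofModel_apply, mixedClass]⟩

section AffineRepresentation

variable {R V : Type*} [Ring R] [AddCommGroup V] [Module R V]

/-- The affine representation of `VB 3` in which `σ₁` has linear part `X` and translation part `u`,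
`ρ₁` is the point reflection `v ↦ -v`, and `threeCycle` is the translation by `w`. -/
def affineRep (X : V ≃ₗ[R] V) (u : V) {w : V} (hw : 3 • w = 0)
    (hXw : X w - X (X w) = w - X w + X (X w) - X (X (X w))) : VB 3 →* (V ≃ᵃ[R] V) :=
  lift (AffineEquiv.constVAdd R V u * X.toAffineEquiv) (LinearEquiv.neg R).toAffineEquiv
    (AffineEquiv.constVAdd R V w)
    (by ext; simp)
    (by ext; simp [← AffineEquiv.constVAdd_nsmul, hw])
    (by ext; simp [AffineEquiv.mul_def, AffineEquiv.inv_def, add_comm])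
    (by
      ext v
      simp only [AffineEquiv.mul_def, AffineEquiv.inv_def, AffineEquiv.constVAdd_symm,
        AffineEquiv.trans_apply, LinearEquiv.coe_toAffineEquiv, AffineEquiv.constVAdd_apply,
        vadd_eq_add, map_add, map_neg]
      linear_combination (norm := module) hXw)

variable {X : V ≃ₗ[R] V} (u : V) {w : V} (hw : 3 • w = 0)
  (hXw : X w - X (X w) = w - X w + X (X w) - X (X (X w)))

theorem affineRep_sigma :
    affineRep X u hw hXw σ₁ = AffineEquiv.constVAdd R V u * X.toAffineEquiv :=
  lift_sigma ..

theorem affineRep_rho : affineRep X u hw hXw ρ₁ = (LinearEquiv.neg R).toAffineEquiv :=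
  lift_rho ..

theorem affineRep_threeCycle : affineRep X u hw hXw τ = AffineEquiv.constVAdd R V w :=
  lift_threeCycle ..

theorem linear_affineRep_sigma : (affineRep X u hw hXw σ₁).linear = X := by
  rw [affineRep_sigma]
  rfl

theorem commutator_le_ker_linear_affineRep :
    K ≤ (AffineEquiv.linearHom.comp (affineRep X u hw hXw)).ker := by
  have hρ : (affineRep X u hw hXw ρ₁).linear = LinearEquiv.neg R := by
    rw [affineRep_rho]
    rfl
  have hτ : (affineRep X u hw hXw τ).linear = 1 := by
    rw [affineRep_threeCycle]
    rfl
  refine commutator_le_ker ?_ hτ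
  ext v
  simp [linear_affineRep_sigma, hρ]

theorem affineRep_commutator_zero : affineRep X u hw hXw ⁅ρ₁, σ₁⁆ 0 = -(2 • u) := by
  have hσ : (AffineEquiv.constVAdd R V u * X.toAffineEquiv)⁻¹ 0 = X.symm (-u) :=
    (AffineEquiv.symm_apply_eq _).2 (by simp [AffineEquiv.mul_def])
  rw [commutatorElement_def, rho_one_inv, map_mul, map_mul, map_mul, map_inv, affineRep_rho,
    affineRep_sigma, AffineEquiv.coe_mul, Function.comp_apply, hσ]
  simp [two_nsmul]

end AffineRepresentation

theorem modelShift_sub :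
    modelShift (1, 0, 0, 0) - modelShift (modelShift (1, 0, 0, 0)) =
      (1, 0, 0, 0) - modelShift (1, 0, 0, 0) + modelShift (modelShift (1, 0, 0, 0)) -
        modelShift (modelShift (modelShift (1, 0, 0, 0))) := by
  simp only [modelShift_apply, map_zero]
  rfl

/-- The affine representation of `VB 3` on the model with linear part `modelShift`, in which
`threeCycle` and `⁅ρ₁, σ₁⁆` are the translations by `(1, 0, 0, 0)` and
`(0, 0, 0, Finsupp.single 0 2)`. -/
noncomputable def modelRep : VB 3 →* (Model ≃ᵃ[ℤ] Model) :=
  affineRep modelShift (0, 0, 0, -Finsupp.single 0 1) (w := (1, 0, 0, 0))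
    (Prod.ext (by decide) (smul_zero 3)) modelShift_sub

theorem commutator_le_ker_linear_modelRep : K ≤ (AffineEquiv.linearHom.comp modelRep).ker :=
  commutator_le_ker_linear_affineRep ..

/-- The translation vectors of the commutator subgroup under `modelRep`; composed with `ofModel`,
this doubles the free part. -/
noncomputable def toModel : AbModule K →+ Model :=
  translationPart modelRep commutator_le_ker_linear_modelRep

theorem toModel_conjAb_sigma (v : AbModule K) :
    toModel (conjAb K σ₁ v) = modelShift (toModel v) := by
  rw [toModel, translationPart_conjAb]
  exact LinearEquiv.congr_fun (linear_affineRep_sigma ..) _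

theorem toModel_threeCycleClass : toModel threeCycleClass = (1, 0, 0, 0) := by
  rw [toModel, threeCycleClass, translationPart_abClass, modelRep, affineRep_threeCycle]
  simp

theorem toModel_threeCycleHom (p : ZMod 3) : toModel (threeCycleHom p) = (p, 0, 0, 0) := by
  have h : toModel.comp threeCycleHom = AddMonoidHom.inl _ _ :=
    addMonoidHom_zmod_ext (by simp [threeCycleHom_one, toModel_threeCycleClass])
  exact DFunLike.congr_fun h p

theorem toModel_mixedClass (m : ℤ) : toModel (mixedClass m) = (0, 0, 0, Finsupp.single m 2) := by
  induction m using Int.induction_on with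
  | zero =>
    rw [mixedClass, zpow_zero, map_one, LinearEquiv.coe_one, id, toModel, translationPart_abClass,
      modelRep, affineRep_commutator_zero]
    simp
  | succ m hm => rw [← conjAb_sigma_mixedClass, toModel_conjAb_sigma, hm, modelShift_single]
  | pred m hm =>
    apply modelShift.injective
    rw [← toModel_conjAb_sigma, conjAb_sigma_mixedClass, modelShift_single, sub_add_cancel, hm]

theorem toModel_linearCombination (h : ℤ →₀ ℤ) :
    toModel (Finsupp.linearCombination ℤ mixedClass h) = (0, 0, 0, 2 • h) := by
  induction h using Finsupp.induction_linear with
  | zero => rw [map_zero, map_zero, smul_zero]; rfl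
  | add f g hf hg => simp [hf, hg]
  | single m k => simp [toModel_mixedClass, mul_comm]

theorem toModel_ofModel (p q r : ZMod 3) (h : ℤ →₀ ℤ) :
    toModel (ofModel (p, q, r, h)) = (p, q, r, 2 • h) := by
  simp [ofModel_apply, toModel_conjAb_sigma, toModel_threeCycleHom, toModel_linearCombination,
    modelShift_apply]

theorem ofModel_injective : Function.Injective ofModel := by
  refine (injective_iff_map_eq_zero ofModel).2 ?_
  rintro ⟨p, q, r, h⟩ hv
  have hpqr : (p, q, r, 2 • h) = 0 := by rw [← toModel_ofModel, hv, map_zero]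
  simpa using hpqr

end VB

/-- `VB_3'/VB_3'' ≅ ℤ/3 ⊕ ℤ/3 ⊕ ℤ/3 ⊕ ℤ^{(∞)}`, where the last factor
is a free abelian group of countably infinite rank (direct sum of copies of `ℤ`
indexed by `ℤ`). -/
theorem VB3_commutator_abelianization :
    Nonempty (Abelianization ↥(commutator (VB 3)) ≃*
      Multiplicative (ZMod 3 × ZMod 3 × ZMod 3 × (ℤ →₀ ℤ))) := by
  have hbij : Function.Bijective VB.ofModel := ⟨VB.ofModel_injective, VB.ofModel_surjective⟩
  exact ⟨(AddEquiv.toMultiplicativeLeft (AddEquiv.ofBijective VB.ofModel hbij)).symm⟩
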